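/- Let n_1 ∈ ℤ² be fixed and let m ∈ ℤ be fixed. Let N, N_2 ≥ 1. Then for any ε > 0, the number of pairs (n, n_2) ∈ (ℤ²)² such that n lies in a ball of radius N, n_2 lies in a ball of radius N_2, n - n_1 + n_2 = 0, and |n|² - |n_1|² + |n_2|² = m, is O(max{N^ε, N_2^ε}), with constant depending only on ε. -/

import Mathlib

/-- `k` lies in the (closed) ball of radius `R` centered at `c ∈ ℝ²`. -/
def inBall (k : ℤ × ℤ) (c : ℝ × ℝ) (R : ℝ) : Prop :=
  ((k.1 : ℝ) - c.1) ^ 2 + ((k.2 : ℝ) - c.2) ^ 2 ≤ R ^ 2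

/-- The squared Euclidean norm of a lattice point. -/
def sqNorm (k : ℤ × ℤ) : ℤ := k.1 ^ 2 + k.2 ^ 2

/-!
Put `k = n - n₂ = 2 n - n₁`. Then `|k|² = 2 m + |n₁|² =: R`, and `k` lies in a ball of radius `2 N`,
so the pairs are counted by the lattice points of the circle `|k|² = R` inside such a ball. There
are `O(R ^ δ)` points on the whole circle, since they are divisors of `R` in `ℤ[i]`; this suffices
when `R` is at most a power of `N`. For larger `R` the ball cuts out a short arc: three lattice
points on it would span a triangle of area at least `1 / 2`, while the circumradius formula
`abc = 4 · area · √R` makes that area too small, so the arc has at most two lattice points.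
-/

open Filter Finset

section DivisorBound

lemma natCast_add_one_le_max_mul_pow_rpow {q δ : ℝ} (hq : 1 < q) (hδ : 0 < δ) (a : ℕ) :
    (a + 1 : ℝ) ≤ max 1 (δ * Real.log q)⁻¹ * (q ^ a) ^ δ := by
  have ht : 0 < δ * Real.log q := mul_pos hδ (Real.log_pos hq)
  set t := δ * Real.log q
  have hexp : a * t + 1 ≤ (q ^ a) ^ δ := by
    calc a * t + 1 ≤ Real.exp (a * t) := Real.add_one_le_exp _
      _ = (q ^ a) ^ δ := by
        rw [Real.rpow_def_of_pos (by positivity), Real.log_pow, mul_assoc, mul_comm _ δ]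
  have hKt : 1 ≤ max 1 t⁻¹ * t := by
    rw [← inv_le_iff_one_le_mul₀ ht]
    exact le_max_right _ _
  calc (a + 1 : ℝ) ≤ a * (max 1 t⁻¹ * t) + max 1 t⁻¹ :=
        add_le_add (le_mul_of_one_le_right a.cast_nonneg hKt) (le_max_left _ _)
    _ = max 1 t⁻¹ * (a * t + 1) := by ring
    _ ≤ max 1 t⁻¹ * (q ^ a) ^ δ := by gcongr

lemma exists_card_Iic_le_mul_prod_map_rpow {ι : Type*} [DecidableEq ι] {q : ι → ℝ}
    (hq : Tendsto q cofinite atTop) {δ : ℝ} (hδ : 0 < δ) :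
    ∃ C : ℝ, 0 < C ∧ ∀ s : Multiset ι, (∀ i ∈ s, 1 < q i) →
      (#(Iic s) : ℝ) ≤ C * (s.map q).prod ^ δ := by
  let K (i : ι) : ℝ := max 1 (δ * Real.log (q i))⁻¹
  have one_le_K (i : ι) : 1 ≤ K i := le_max_left _ _
  have K_eq_one : ∀ᶠ i in cofinite, K i = 1 := by
    have hlog := (Real.tendsto_log_atTop.const_mul_atTop hδ).comp hq
    filter_upwards [hlog.eventually_ge_atTop 1] with i hi
    exact max_eq_left (inv_le_one_of_one_le₀ hi)
  let S : Finset ι := (eventually_cofinite.1 K_eq_one).toFinset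
  have prod_K_le (T : Finset ι) : ∏ i ∈ T, K i ≤ ∏ i ∈ S, K i := by
    calc ∏ i ∈ T, K i ≤ ∏ i ∈ S ∪ T, K i :=
          prod_le_prod_of_subset_of_one_le subset_union_right
            (fun i _ => zero_le_one.trans (one_le_K i)) fun i _ _ => one_le_K i
      _ = ∏ i ∈ S, K i :=
          (prod_subset subset_union_left fun i _ hi => by simpa [S] using hi).symm
  refine ⟨∏ i ∈ S, K i, prod_pos fun i _ => zero_lt_one.trans_le (one_le_K i), fun s hs => ?_⟩
  have hq_nonneg : ∀ i ∈ s.toFinset, 0 ≤ q i ^ s.count i := fun i hi =>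
    pow_nonneg (zero_le_one.trans (hs i (Multiset.mem_toFinset.1 hi)).le) _
  calc (#(Iic s) : ℝ) = ∏ i ∈ s.toFinset, (s.count i + 1 : ℝ) := by
        rw [Multiset.card_Iic]; push_cast; rfl
    _ ≤ ∏ i ∈ s.toFinset, K i * (q i ^ s.count i) ^ δ :=
        prod_le_prod (fun _ _ => by positivity) fun i hi =>
          natCast_add_one_le_max_mul_pow_rpow (hs i (Multiset.mem_toFinset.1 hi)) hδ _
    _ = (∏ i ∈ s.toFinset, K i) * (s.map q).prod ^ δ := by
        rw [prod_mul_distrib, Real.finsetProd_rpow _ _ hq_nonneg, prod_multiset_map_count]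
    _ ≤ (∏ i ∈ S, K i) * (s.map q).prod ^ δ := by
        refine mul_le_mul_of_nonneg_right (prod_K_le _) (Real.rpow_nonneg ?_ _)
        rw [prod_multiset_map_count]
        exact prod_nonneg hq_nonneg

lemma finite_units_of_tendsto_cofinite {M : Type*} [Monoid M] {ν : M →* ℕ}
    (hν : Tendsto ν cofinite atTop) : Finite Mˣ := by
  have htendsto : Tendsto (fun u : Mˣ => ν u) cofinite atTop :=
    hν.comp Units.val_injective.tendsto_cofinite
  have hone (u : Mˣ) : ν u = 1 := Nat.isUnit_iff.1 (u.isUnit.map ν)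
  simpa [hone, Set.finite_univ_iff] using eventually_cofinite.1 (htendsto.eventually_gt_atTop 1)

lemma one_lt_of_not_isUnit_of_tendsto_cofinite {M : Type*} [CommMonoidWithZero M]
    [IsCancelMulZero M] {ν : M →* ℕ} (hν : Tendsto ν cofinite atTop) {x : M} (hx0 : x ≠ 0)
    (hx : ¬IsUnit x) : 1 < ν x := by
  by_contra! hle
  have htendsto : Tendsto (fun k : ℕ => ν (x ^ k)) cofinite atTop :=
    hν.comp (pow_injective_of_not_isUnit hx hx0).tendsto_cofinite
  obtain ⟨k, hk⟩ := (htendsto.eventually_gt_atTop 1).exists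
  rw [map_pow] at hk
  exact hk.not_ge (pow_le_one₀ (Nat.zero_le _) hle)

variable {M : Type*} [CommMonoidWithZero M] [UniqueFactorizationMonoid M]

lemma finite_dvd [Finite Mˣ] {z : M} (hz : z ≠ 0) : {w | w ∣ z}.Finite := by
  have := Fintype.ofFinite Mˣ
  have := UniqueFactorizationMonoid.fintypeSubtypeDvd z hz
  exact Set.finite_coe_iff.1 (Finite.of_fintype {w // w ∣ z})

open UniqueFactorizationMonoid in
lemma ncard_dvd_le_card_Iic_normalizedFactors_mul_card_units [NormalizationMonoid M]
    [DecidableEq M] [Finite Mˣ] {z : M} (hz : z ≠ 0) :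
    {w | w ∣ z}.ncard ≤ #(Iic (normalizedFactors z)) * Nat.card Mˣ := by
  have hsub : {w | w ∣ z} ⊆ Set.image (fun p : Multiset M × Mˣ => p.1.prod * p.2)
      ((Iic (normalizedFactors z) : Set (Multiset M)) ×ˢ Set.univ) := by
    intro w hw
    have hw0 : w ≠ 0 := ne_zero_of_dvd_ne_zero hz hw
    obtain ⟨u, hu⟩ := prod_normalizedFactors hw0
    have hle := (dvd_iff_normalizedFactors_le_normalizedFactors hw0 hz).1 hw
    exact ⟨(normalizedFactors w, u), ⟨mem_coe.2 (mem_Iic.2 hle), Set.mem_univ u⟩, hu⟩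
  have hfin := (finite_toSet (Iic (normalizedFactors z))).prod (Set.finite_univ (α := Mˣ))
  calc {w | w ∣ z}.ncard ≤ _ := Set.ncard_le_ncard hsub (hfin.image _)
    _ ≤ _ := Set.ncard_image_le hfin
    _ = _ := by rw [Set.ncard_prod, Set.ncard_coe_finset, Set.ncard_univ]

theorem exists_ncard_dvd_le_mul_rpow {ν : M →* ℕ} (hν : Tendsto ν cofinite atTop) {δ : ℝ}
    (hδ : 0 < δ) :
    ∃ C : ℝ, 0 < C ∧ ∀ z : M, z ≠ 0 → ({w | w ∣ z}.ncard : ℝ) ≤ C * (ν z : ℝ) ^ δ := by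
  classical
  let _ : StrongNormalizationMonoid M := UniqueFactorizationMonoid.strongNormalizationMonoid
  have := finite_units_of_tendsto_cofinite hν
  obtain ⟨C, hC, hcard⟩ :=
    exists_card_Iic_le_mul_prod_map_rpow (tendsto_natCast_atTop_atTop.comp hν) hδ
  refine ⟨C * Nat.card Mˣ, mul_pos hC (mod_cast Nat.card_pos), fun z hz => ?_⟩
  set s := UniqueFactorizationMonoid.normalizedFactors z
  have one_lt : ∀ p ∈ s, (1 : ℝ) < ν p := fun p hp => by
    have hprime := UniqueFactorizationMonoid.prime_of_normalized_factor p hp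
    exact_mod_cast one_lt_of_not_isUnit_of_tendsto_cofinite hν hprime.ne_zero hprime.not_isUnit
  have prod_eq : (s.map fun p => (ν p : ℝ)).prod = ν z := by
    obtain ⟨u, hu⟩ := UniqueFactorizationMonoid.prod_normalizedFactors hz
    have hνu : ν u = 1 := Nat.isUnit_iff.1 (u.isUnit.map ν)
    rw [← hu, map_mul, hνu, mul_one, map_multiset_prod, Nat.cast_multiset_prod, Multiset.map_map]
    rfl
  calc ({w | w ∣ z}.ncard : ℝ) ≤ #(Iic s) * Nat.card Mˣ := by
        exact_mod_cast ncard_dvd_le_card_Iic_normalizedFactors_mul_card_units hz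
    _ ≤ C * (s.map fun p => (ν p : ℝ)).prod ^ δ * Nat.card Mˣ := by
        gcongr
        exact hcard s one_lt
    _ = C * Nat.card Mˣ * (ν z : ℝ) ^ δ := by rw [prod_eq]; ring

end DivisorBound

section Circle

lemma tendsto_natAbs_norm_cofinite_atTop {d : ℤ} (hd : d < 0) :
    Tendsto (fun z : ℤ√d => z.norm.natAbs) cofinite atTop := by
  refine tendsto_atTop.2 fun B => eventually_cofinite.2 ?_
  have hinj : Function.Injective fun z : ℤ√d => (z.re, z.im) := fun _ _ h =>
    Zsqrtd.ext (congrArg Prod.fst h) (congrArg Prod.snd h)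
  refine (((Set.finite_Icc (-(B : ℤ)) B).prod (Set.finite_Icc (-(B : ℤ)) B)).preimage
    hinj.injOn).subset fun z hz => ?_
  have hz' : z.re ^ 2 + -d * z.im ^ 2 ≤ B := by
    have h : z.norm ≤ B := by simp only [Set.mem_ofPred_eq] at hz; omega
    rw [Zsqrtd.norm_def] at h
    linarith
  have him : z.im ^ 2 ≤ B := by nlinarith [sq_nonneg z.re, sq_nonneg z.im]
  have hre : z.re ^ 2 ≤ B := by nlinarith [sq_nonneg z.im]
  simp only [Set.mem_preimage, Set.mem_prod, Set.mem_Icc]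
  refine ⟨⟨?_, ?_⟩, ?_, ?_⟩ <;> nlinarith

/-- The lattice point `(a, b)` as the Gaussian integer `a + b i`. -/
def toGaussianInt (k : ℤ × ℤ) : GaussianInt := ⟨k.1, k.2⟩

lemma toGaussianInt_injective : Function.Injective toGaussianInt :=
  fun _ _ h => Prod.ext (congrArg Zsqrtd.re h) (congrArg Zsqrtd.im h)

lemma norm_toGaussianInt (k : ℤ × ℤ) : (toGaussianInt k).norm = sqNorm k := by
  rw [Zsqrtd.norm_def, toGaussianInt, sqNorm]
  ring

lemma toGaussianInt_dvd_sqNorm (k : ℤ × ℤ) : toGaussianInt k ∣ (sqNorm k : GaussianInt) :=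
  ⟨star (toGaussianInt k), by rw [← Zsqrtd.norm_eq_mul_conj, norm_toGaussianInt]⟩

lemma finite_sqNorm_eq (R : ℤ) : {k | sqNorm k = R}.Finite := by
  have hfin := eventually_cofinite.1 <| ((tendsto_natAbs_norm_cofinite_atTop neg_one_lt_zero).comp
    toGaussianInt_injective.tendsto_cofinite).eventually_gt_atTop R.natAbs
  refine hfin.subset fun k (hk : sqNorm k = R) => ?_
  simp only [Set.mem_ofPred_eq, Function.comp_apply, norm_toGaussianInt, hk, lt_irrefl,
    not_false_eq_true]

theorem exists_ncard_sqNorm_eq_le_mul_rpow {δ : ℝ} (hδ : 0 < δ) :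
    ∃ C : ℝ, 0 < C ∧ ∀ R : ℤ, 0 < R → ({k | sqNorm k = R}.ncard : ℝ) ≤ C * (R : ℝ) ^ δ := by
  let ν : GaussianInt →* ℕ := Int.natAbsHom.toMonoidHom.comp Zsqrtd.normMonoidHom
  have hν : Tendsto ν cofinite atTop := tendsto_natAbs_norm_cofinite_atTop neg_one_lt_zero
  obtain ⟨C, hC, hdvd⟩ := exists_ncard_dvd_le_mul_rpow hν (half_pos hδ)
  refine ⟨C, hC, fun R hR => ?_⟩
  have hR0 : (0 : ℝ) ≤ R := mod_cast hR.le
  have hR_ne : (R : GaussianInt) ≠ 0 := mod_cast hR.ne'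
  have := finite_units_of_tendsto_cofinite hν
  have hmaps : ∀ k ∈ {k | sqNorm k = R}, toGaussianInt k ∈ {w | w ∣ (R : GaussianInt)} := by
    rintro k rfl
    exact toGaussianInt_dvd_sqNorm k
  have hνR : (ν R : ℝ) = (R : ℝ) ^ (2 : ℝ) := by
    change ((R : GaussianInt).norm.natAbs : ℝ) = _
    rw [Zsqrtd.norm_intCast, Nat.cast_natAbs, abs_mul_self, Int.cast_mul, Real.rpow_two, sq]
  calc ({k | sqNorm k = R}.ncard : ℝ) ≤ {w | w ∣ (R : GaussianInt)}.ncard := by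
        exact_mod_cast Set.ncard_le_ncard_of_injOn _ hmaps toGaussianInt_injective.injOn
          (finite_dvd hR_ne)
    _ ≤ C * (ν R : ℝ) ^ (δ / 2) := hdvd _ hR_ne
    _ = C * (R : ℝ) ^ δ := by rw [hνR, ← Real.rpow_mul hR0, mul_div_cancel₀ δ two_ne_zero]

end Circle

section Arc

lemma sqNorm_nonneg (k : ℤ × ℤ) : 0 ≤ sqNorm k := by
  rw [sqNorm]
  positivity

lemma sqNorm_pos {k : ℤ × ℤ} (hk : k ≠ 0) : 0 < sqNorm k := by
  rw [← norm_toGaussianInt, GaussianInt.norm_pos]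
  exact toGaussianInt_injective.ne hk

/-- The circumradius formula `abc = 4 · area · radius`, squared. -/
lemma sqNorm_sub_mul_sqNorm_sub_mul_sqNorm_sub {a b c : ℤ × ℤ} (hb : sqNorm b = sqNorm a)
    (hc : sqNorm c = sqNorm a) :
    sqNorm (b - a) * sqNorm (c - a) * sqNorm (b - c) =
      4 * sqNorm a * ((b - a).1 * (c - a).2 - (b - a).2 * (c - a).1) ^ 2 := by
  obtain ⟨u, rfl⟩ : ∃ u, b = a + u := ⟨b - a, by abel⟩
  obtain ⟨v, rfl⟩ : ∃ v, c = a + v := ⟨c - a, by abel⟩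
  rw [add_sub_cancel_left, add_sub_cancel_left, add_sub_add_left_eq_sub]
  set D := u.1 * v.2 - u.2 * v.1
  simp only [sqNorm, Prod.fst_add, Prod.snd_add, Prod.fst_sub, Prod.snd_sub] at hb hc ⊢
  -- Cramer's rule for the system `2 ⟪a, u⟫ = -|u|²`, `2 ⟪a, v⟫ = -|v|²`.
  have cramer_fst : 2 * D * a.1 = (v.1 ^ 2 + v.2 ^ 2) * u.2 - (u.1 ^ 2 + u.2 ^ 2) * v.2 := by
    linear_combination v.2 * hb - u.2 * hc
  have cramer_snd : 2 * D * a.2 = (u.1 ^ 2 + u.2 ^ 2) * v.1 - (v.1 ^ 2 + v.2 ^ 2) * u.1 := by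
    linear_combination u.1 * hc - v.1 * hb
  calc _ = ((v.1 ^ 2 + v.2 ^ 2) * u.2 - (u.1 ^ 2 + u.2 ^ 2) * v.2) ^ 2 +
        ((u.1 ^ 2 + u.2 ^ 2) * v.1 - (v.1 ^ 2 + v.2 ^ 2) * u.1) ^ 2 := by ring
    _ = _ := by rw [← cramer_fst, ← cramer_snd]; ring

lemma pos_and_four_mul_le_of_sqNorm_eq {R : ℤ} {a b c : ℤ × ℤ} (ha : sqNorm a = R)
    (hb : sqNorm b = R) (hc : sqNorm c = R) (hba : b ≠ a) (hca : c ≠ a) (hbc : b ≠ c) :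
    0 < R ∧ 4 * R ≤ sqNorm (b - a) * sqNorm (c - a) * sqNorm (b - c) := by
  have hpos : 0 < sqNorm (b - a) * sqNorm (c - a) * sqNorm (b - c) :=
    mul_pos (mul_pos (sqNorm_pos (sub_ne_zero.2 hba)) (sqNorm_pos (sub_ne_zero.2 hca)))
      (sqNorm_pos (sub_ne_zero.2 hbc))
  rw [sqNorm_sub_mul_sqNorm_sub_mul_sqNorm_sub (hb.trans ha.symm) (hc.trans ha.symm), ha] at hpos ⊢
  have hR : 0 < R := by linarith [pos_of_mul_pos_left hpos (sq_nonneg _)]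
  exact ⟨hR, le_mul_of_one_le_right (by positivity) (pos_of_mul_pos_right hpos (by positivity))⟩

lemma inBall.sqNorm_sub_le {a b : ℤ × ℤ} {c : ℝ × ℝ} {N : ℝ} (ha : inBall a c N)
    (hb : inBall b c N) : (sqNorm (a - b) : ℝ) ≤ 4 * N ^ 2 := by
  simp only [inBall, sqNorm, Prod.fst_sub, Prod.snd_sub] at *
  push_cast
  nlinarith [sq_nonneg ((a.1 - c.1 : ℝ) + (b.1 - c.1)), sq_nonneg ((a.2 - c.2 : ℝ) + (b.2 - c.2))]

lemma pos_and_le_of_two_lt_ncard_sqNorm_eq_inBall {R : ℤ} {c : ℝ × ℝ} {N : ℝ}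
    (h : 2 < {k | sqNorm k = R ∧ inBall k c N}.ncard) : 0 < R ∧ (R : ℝ) ≤ 16 * N ^ 6 := by
  obtain ⟨x, y, z, ⟨hx, hxN⟩, ⟨hy, hyN⟩, ⟨hz, hzN⟩, hxy, hxz, hyz⟩ :=
    (Set.two_lt_ncard_iff (Set.finite_of_ncard_pos (by omega))).1 h
  obtain ⟨hR, hle⟩ := pos_and_four_mul_le_of_sqNorm_eq hx hy hz hxy.symm hxz.symm hyz
  have cast_sqNorm_nonneg (k : ℤ × ℤ) : (0 : ℝ) ≤ sqNorm k := mod_cast sqNorm_nonneg k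
  have hprod : 4 * (R : ℝ) ≤ 4 * N ^ 2 * (4 * N ^ 2) * (4 * N ^ 2) := by
    calc 4 * (R : ℝ) ≤ sqNorm (y - x) * sqNorm (z - x) * sqNorm (y - z) := by exact_mod_cast hle
      _ ≤ _ := by
        gcongr
        exacts [cast_sqNorm_nonneg _, cast_sqNorm_nonneg _, hyN.sqNorm_sub_le hxN,
          hzN.sqNorm_sub_le hxN, hyN.sqNorm_sub_le hzN]
  exact ⟨hR, by linarith⟩

theorem exists_ncard_sqNorm_eq_inBall_le_mul_rpow {ε : ℝ} (hε : 0 < ε) :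
    ∃ C : ℝ, 0 < C ∧ ∀ (R : ℤ) (c : ℝ × ℝ) (N : ℝ), 1 ≤ N →
      ({k | sqNorm k = R ∧ inBall k c N}.ncard : ℝ) ≤ C * N ^ ε := by
  obtain ⟨C, hC, hcircle⟩ := exists_ncard_sqNorm_eq_le_mul_rpow (δ := ε / 6) (by positivity)
  refine ⟨max 2 (C * 16 ^ (ε / 6)), by positivity, fun R c N hN => ?_⟩
  have hN0 : 0 ≤ N := zero_le_one.trans hN
  rcases le_or_gt {k | sqNorm k = R ∧ inBall k c N}.ncard 2 with hle | hlt
  · calc ({k | sqNorm k = R ∧ inBall k c N}.ncard : ℝ) ≤ 2 * 1 := by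
          rw [mul_one]; exact_mod_cast hle
      _ ≤ max 2 (C * 16 ^ (ε / 6)) * N ^ ε := by
          gcongr
          exacts [le_max_left _ _, Real.one_le_rpow hN hε.le]
  · obtain ⟨hR, hRN⟩ := pos_and_le_of_two_lt_ncard_sqNorm_eq_inBall hlt
    have : (0 : ℝ) ≤ R := mod_cast hR.le
    calc ({k | sqNorm k = R ∧ inBall k c N}.ncard : ℝ) ≤ {k | sqNorm k = R}.ncard := by
          exact_mod_cast Set.ncard_le_ncard (Set.sep_subset _ _) (finite_sqNorm_eq R)
      _ ≤ C * (R : ℝ) ^ (ε / 6) := hcircle R hR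
      _ ≤ C * (16 * N ^ (6 : ℝ)) ^ (ε / 6) := by
          gcongr
          exact_mod_cast hRN
      _ = C * 16 ^ (ε / 6) * N ^ ε := by
          rw [Real.mul_rpow (by norm_num) (by positivity), ← Real.rpow_mul hN0,
            mul_div_cancel₀ ε (by norm_num), mul_assoc]
      _ ≤ max 2 (C * 16 ^ (ε / 6)) * N ^ ε := by
          gcongr
          exact le_max_right _ _

end Arc

section Pairs

lemma inBall.zsmul_sub {k : ℤ × ℤ} {c : ℝ × ℝ} {N : ℝ} (hk : inBall k c N) (a : ℤ) (v : ℤ × ℤ) :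
    inBall (a • k - v) (a * c.1 - v.1, a * c.2 - v.2) (a * N) := by
  have hmul := mul_le_mul_of_nonneg_left hk (sq_nonneg (a : ℝ))
  simp only [inBall, Prod.fst_sub, Prod.snd_sub, Prod.smul_fst, Prod.smul_snd, smul_eq_mul]
  push_cast
  linarith

lemma sqNorm_sub_eq_of_sub_add_eq_zero {n n₁ n₂ : ℤ × ℤ} (h : n - n₁ + n₂ = 0) :
    sqNorm (n - n₂) = 2 * (sqNorm n - sqNorm n₁ + sqNorm n₂) + sqNorm n₁ := by
  obtain rfl : n₁ = n + n₂ := by linear_combination -h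
  simp only [sqNorm, Prod.fst_add, Prod.snd_add, Prod.fst_sub, Prod.snd_sub]
  ring

lemma injOn_sub_of_sub_add_eq_zero (n₁ : ℤ × ℤ) :
    {p : (ℤ × ℤ) × (ℤ × ℤ) | p.1 - n₁ + p.2 = 0}.InjOn fun p => p.1 - p.2 := by
  rintro ⟨⟨a, b⟩, a₂, b₂⟩ hp ⟨⟨x, y⟩, x₂, y₂⟩ hq h
  simp only [Set.mem_ofPred_eq, Prod.ext_iff, Prod.fst_add, Prod.snd_add, Prod.fst_sub,
    Prod.snd_sub, Prod.fst_zero, Prod.snd_zero] at hp hq h ⊢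
  omega

theorem count_pairs_fixed_n₁_general (ε : ℝ) (hε : 0 < ε) :
    ∃ C : ℝ, 0 < C ∧ ∀ (n₁ : ℤ × ℤ) (m : ℤ) (N : ℝ), 1 ≤ N → ∀ c : ℝ × ℝ,
      {p : (ℤ × ℤ) × (ℤ × ℤ) | inBall p.1 c N ∧ p.1 - n₁ + p.2 = 0 ∧
        sqNorm p.1 - sqNorm n₁ + sqNorm p.2 = m}.Finite ∧
      ({p : (ℤ × ℤ) × (ℤ × ℤ) | inBall p.1 c N ∧ p.1 - n₁ + p.2 = 0 ∧
        sqNorm p.1 - sqNorm n₁ + sqNorm p.2 = m}.ncard : ℝ) ≤ C * N ^ ε := by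
  obtain ⟨C, hC, harc⟩ := exists_ncard_sqNorm_eq_inBall_le_mul_rpow hε
  refine ⟨C * 2 ^ ε, by positivity, fun n₁ m N hN c => ?_⟩
  set S := {p : (ℤ × ℤ) × (ℤ × ℤ) | inBall p.1 c N ∧ p.1 - n₁ + p.2 = 0 ∧
    sqNorm p.1 - sqNorm n₁ + sqNorm p.2 = m}
  set T := {k | sqNorm k = 2 * m + sqNorm n₁ ∧ inBall k (2 * c.1 - n₁.1, 2 * c.2 - n₁.2) (2 * N)}
  have hmaps : ∀ p ∈ S, p.1 - p.2 ∈ T := by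
    rintro ⟨n, n₂⟩ ⟨hball, hsum, hnorm⟩
    refine ⟨by rw [sqNorm_sub_eq_of_sub_add_eq_zero hsum, hnorm], ?_⟩
    rw [show n - n₂ = (2 : ℤ) • n - n₁ by linear_combination -hsum]
    exact_mod_cast hball.zsmul_sub 2 n₁
  have hinj : S.InjOn fun p => p.1 - p.2 :=
    (injOn_sub_of_sub_add_eq_zero n₁).mono fun _ hp => hp.2.1
  have hT : T.Finite := (finite_sqNorm_eq _).subset fun _ hk => hk.1
  refine ⟨hT.of_injOn hmaps hinj, ?_⟩
  calc (S.ncard : ℝ) ≤ T.ncard := by exact_mod_cast Set.ncard_le_ncard_of_injOn _ hmaps hinj hT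
    _ ≤ C * (2 * N) ^ ε := harc _ _ _ (by linarith)
    _ = C * 2 ^ ε * N ^ ε := by rw [Real.mul_rpow (by norm_num) (by linarith), mul_assoc]

end Pairs

/-- counting pairs `(n, n₂)` with `n₁` fixed. -/
theorem count_pairs_fixed_n₁ (ε : ℝ) (hε : 0 < ε) :
    ∃ C : ℝ, 0 < C ∧ ∀ (n₁ : ℤ × ℤ) (m : ℤ) (N N₂ : ℝ), 1 ≤ N → 1 ≤ N₂ →
      ∀ c c₂ : ℝ × ℝ,
      (({p : (ℤ × ℤ) × (ℤ × ℤ) |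
          inBall p.1 c N ∧ inBall p.2 c₂ N₂ ∧ p.1 - n₁ + p.2 = 0 ∧
            sqNorm p.1 - sqNorm n₁ + sqNorm p.2 = m}.ncard : ℝ))
        ≤ C * max (N ^ ε) (N₂ ^ ε) := by
  obtain ⟨C, hC, h⟩ := count_pairs_fixed_n₁_general ε hε
  refine ⟨C, hC, fun n₁ m N N₂ hN _ c c₂ => ?_⟩
  obtain ⟨hfin, hle⟩ := h n₁ m N hN c
  refine (Nat.cast_le.2 (Set.ncard_le_ncard ?_ hfin)).trans (hle.trans ?_)
  · exact fun _ ⟨hball, _, hsum, hnorm⟩ => ⟨hball, hsum, hnorm⟩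
  · exact mul_le_mul_of_nonneg_left (le_max_left _ _) hC.le
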